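/- Let p and q be FNM guarded processes (syntactic category s). If p ~sp q, then (i) a̲.p ~sp a̲.q for every input action a ∈ L, and (ii) p + r ~sp q + r for every FNM guarded process r. (Structure-preserving bisimilarity is a congruence for strong prefixing and for choice.) -/

import Mathlib

/-- Actions of FNM: the invisible action τ, input actions `a ∈ L` and
output actions `ā ∈ L̄` (here `α` plays the role of the finite set `L`). -/
inductive Act (α : Type) where
  | tau : Act α
  | inp : α → Act α
  | out : α → Act α
  deriving DecidableEq

/-- (Open) FNM terms: `0`, the variable `x`, action prefixing `mu.t`, strong
prefixing `a̲.s`, choice `s+s`, constants `C`, parallel `t|t` and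
restriction `(νa)p`.  The syntactic categories are carved out below. -/
inductive FNM (α κ : Type) where
  | nil : FNM α κ
  | var : FNM α κ
  | pref : Act α → FNM α κ → FNM α κ
  | spref : α → FNM α κ → FNM α κ
  | sum : FNM α κ → FNM α κ → FNM α κ
  | const : κ → FNM α κ
  | par : FNM α κ → FNM α κ → FNM α κ
  | res : α → FNM α κ → FNM α κ
  deriving DecidableEq

namespace FNM

variable {α κ : Type}

mutual
  /-- Guarded terms: syntactic category `s ::= 0 | mu.t | a̲.s | s+s`
  (with `t` restriction-free). -/
  def Grd : FNM α κ → Prop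
    | .nil => True
    | .var => False
    | .pref _ t => RF t
    | .spref _ s => Grd s
    | .sum s1 s2 => Grd s1 ∧ Grd s2
    | .const _ => False
    | .par _ _ => False
    | .res _ _ => False
  /-- Restriction-free terms: syntactic category `t ::= q | t|t`, where
  `q ::= s | C | x` is the category of sequential terms. -/
  def RF : FNM α κ → Prop
    | .nil => True
    | .var => True
    | .pref _ t => RF t
    | .spref _ s => Grd s
    | .sum s1 s2 => Grd s1 ∧ Grd s2
    | .const _ => True
    | .par t1 t2 => RF t1 ∧ RF t2
    | .res _ _ => False
end

/-- Sequential terms: `q ::= s | C | x`. -/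
def Seq (t : FNM α κ) : Prop :=
  Grd t ∨ (∃ c, t = FNM.const c) ∨ t = FNM.var

/-- General terms: `p ::= t | (νa)p`. -/
def Gen : FNM α κ → Prop
  | .res _ p => Gen p
  | t => RF t

/-- Closed terms: no occurrence of the variable. -/
def VarFree : FNM α κ → Prop
  | .nil => True
  | .var => False
  | .pref _ t => VarFree t
  | .spref _ s => VarFree s
  | .sum s1 s2 => VarFree s1 ∧ VarFree s2
  | .const _ => True
  | .par t1 t2 => VarFree t1 ∧ VarFree t2
  | .res _ p => VarFree p

/-- Substitution `p{r/x}` of the term `r` for every occurrence of the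
variable `x` in `p` (constants are dealt with via the environment). -/
def subst (r : FNM α κ) : FNM α κ → FNM α κ
  | .nil => .nil
  | .var => r
  | .pref mu t => .pref mu (subst r t)
  | .spref a s => .spref a (subst r s)
  | .sum s1 s2 => .sum (subst r s1) (subst r s2)
  | .const c => .const c
  | .par t1 t2 => .par (subst r t1) (subst r t2)
  | .res a p => .res a (subst r p)

/-- `mu` uses the name `a`. -/
def _root_.Act.uses (a : α) : Act α → Prop
  | .tau => False
  | .inp b => b = a
  | .out b => b = a

/-- `a` occurs free in a term (through an environment `env` giving the body
of each process constant). -/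
inductive FreeIn (env : κ → FNM α κ) (a : α) : FNM α κ → Prop where
  | pref_act {mu : Act α} {t : FNM α κ} : mu.uses a → FreeIn env a (.pref mu t)
  | pref_cont {mu : Act α} {t : FNM α κ} : FreeIn env a t → FreeIn env a (.pref mu t)
  | spref_act {s : FNM α κ} : FreeIn env a (.spref a s)
  | spref_cont {b : α} {s : FNM α κ} : FreeIn env a s → FreeIn env a (.spref b s)
  | sum_l {s1 s2 : FNM α κ} : FreeIn env a s1 → FreeIn env a (.sum s1 s2)
  | sum_r {s1 s2 : FNM α κ} : FreeIn env a s2 → FreeIn env a (.sum s1 s2)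
  | par_l {t1 t2 : FNM α κ} : FreeIn env a t1 → FreeIn env a (.par t1 t2)
  | par_r {t1 t2 : FNM α κ} : FreeIn env a t2 → FreeIn env a (.par t1 t2)
  | res {b : α} {p : FNM α κ} : a ≠ b → FreeIn env a p → FreeIn env a (.res b p)
  | const {c : κ} : FreeIn env a (env c) → FreeIn env a (.const c)

/-- `a` occurs bound (by a restriction) in a term. -/
inductive BoundIn (env : κ → FNM α κ) (a : α) : FNM α κ → Prop where
  | res_here {p : FNM α κ} : BoundIn env a (.res a p)
  | res_in {b : α} {p : FNM α κ} : BoundIn env a p → BoundIn env a (.res b p)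
  | pref {mu : Act α} {t : FNM α κ} : BoundIn env a t → BoundIn env a (.pref mu t)
  | spref {b : α} {s : FNM α κ} : BoundIn env a s → BoundIn env a (.spref b s)
  | sum_l {s1 s2 : FNM α κ} : BoundIn env a s1 → BoundIn env a (.sum s1 s2)
  | sum_r {s1 s2 : FNM α κ} : BoundIn env a s2 → BoundIn env a (.sum s1 s2)
  | par_l {t1 t2 : FNM α κ} : BoundIn env a t1 → BoundIn env a (.par t1 t2)
  | par_r {t1 t2 : FNM α κ} : BoundIn env a t2 → BoundIn env a (.par t1 t2)
  | const {c : κ} : BoundIn env a (env c) → BoundIn env a (.const c)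

end FNM

/-- A place of the net `N_FNM`: a sequential (extended) term, rendered as a
pure sequential term together with the record `ρ : α → Bool` of which names
have been replaced by their restricted counterparts (`ρ a = true` represents
the substitution `{a'/a}`). -/
abbrev Place (α κ : Type) := FNM α κ × (α → Bool)

namespace FNM

variable {α κ : Type} [DecidableEq α] [DecidableEq κ] [Fintype α]

/-- The decomposition function `dec`, mapping (extended) terms to markings:
`dec(0) = θ`, `dec(p|q) = dec(p) ⊕ dec(q)`, `dec((νa)p) = dec(p){a'/a}`, and
a sequential term other than `0` is mapped to a single place. -/
def dec (ρ : α → Bool) : FNM α κ → Multiset (Place α κ)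
  | .nil => 0
  | .par t1 t2 => dec ρ t1 + dec ρ t2
  | .res a p => dec (Function.update ρ a true) p
  | t => {(t, ρ)}

end FNM

/-- Extended visible actions: inputs and outputs, possibly restricted
(`inp a true` represents `a'`, `out a false` represents `ā`, etc.). -/
inductive XAct (α : Type) where
  | inp : α → Bool → XAct α
  | out : α → Bool → XAct α

/-- Labels of net transitions: `τ` is the empty sequence, and otherwise a
sequence of extended actions. -/
abbrev Lbl (α : Type) := List (XAct α)

/-- An extended action carries no restricted name. -/
def XAct.unres {α : Type} : XAct α → Prop
  | .inp _ r => r = false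
  | .out _ r => r = false

/-- The label contributed by prefix `mu` under the restriction record `ρ`. -/
def actL {α : Type} (ρ : α → Bool) : Act α → Lbl α
  | .tau => []
  | .inp a => [XAct.inp a (ρ a)]
  | .out a => [XAct.out a (ρ a)]

/-- The synchronization relation `Sync(σ1, σ2, σ)`: `Sync(α, ᾱ, τ)`,
`Sync(aσ, ā, σ)` and `Sync(ā, aσ, σ)` for `σ ≠ ε` (also on restricted
actions). -/
inductive Sync {α : Type} : Lbl α → Lbl α → Lbl α → Prop where
  | inout (a : α) (r : Bool) : Sync [XAct.inp a r] [XAct.out a r] []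
  | outin (a : α) (r : Bool) : Sync [XAct.out a r] [XAct.inp a r] []
  | seqL (a : α) (r : Bool) (σ : Lbl α) :
      σ ≠ [] → Sync (XAct.inp a r :: σ) [XAct.out a r] σ
  | seqR (a : α) (r : Bool) (σ : Lbl α) :
      σ ≠ [] → Sync [XAct.out a r] (XAct.inp a r :: σ) σ

namespace FNM

variable {α κ : Type} [DecidableEq α] [DecidableEq κ] [Fintype α]

/-- A marking is admissible if for no name `a` both `a` and its restricted
counterpart `a'` occur free in it. -/
def Adm (env : κ → FNM α κ) (m : Multiset (Place α κ)) : Prop :=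
  ∀ a : α, ¬ ((∃ p ∈ m, FreeIn env a p.1 ∧ p.2 a = false) ∧
              (∃ p ∈ m, FreeIn env a p.1 ∧ p.2 a = true))

/-- The net transitions of `N_FNM`, generated by the rules (pref), (sum₁),
(sum₂), (cons), (s-pref) and (s-com). -/
inductive Tr (env : κ → FNM α κ) :
    Multiset (Place α κ) → Lbl α → Multiset (Place α κ) → Prop where
  | pref (ρ : α → Bool) (mu : Act α) (t : FNM α κ) :
      Tr env {(FNM.pref mu t, ρ)} (actL ρ mu) (dec ρ t)
  | sum1 (ρ : α → Bool) (s1 s2 : FNM α κ) (σ : Lbl α) (m : Multiset (Place α κ)) :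
      Tr env (dec ρ s1) σ m → Tr env {(FNM.sum s1 s2, ρ)} σ m
  | sum2 (ρ : α → Bool) (s1 s2 : FNM α κ) (σ : Lbl α) (m : Multiset (Place α κ)) :
      Tr env (dec ρ s2) σ m → Tr env {(FNM.sum s1 s2, ρ)} σ m
  | cons (ρ : α → Bool) (c : κ) (σ : Lbl α) (m : Multiset (Place α κ)) :
      Tr env (dec ρ (env c)) σ m → Tr env {(FNM.const c, ρ)} σ m
  | spref (ρ : α → Bool) (a : α) (s : FNM α κ) (σ : Lbl α) (m : Multiset (Place α κ)) :
      Tr env (dec ρ s) σ m →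
      Tr env {(FNM.spref a s, ρ)} (XAct.inp a (ρ a) :: σ) m
  | scom (m1 m2 m1' m2' : Multiset (Place α κ)) (σ1 σ2 σ : Lbl α) :
      Tr env m1 σ1 m1' → Tr env m2 σ2 m2' →
      Adm env (m1 + m2) → Sync σ1 σ2 σ →
      Tr env (m1 + m2) σ (m1' + m2')

/-- Tritions of the net `N_FNM`: only those whose label contains no
restricted action are kept. -/
def NetTr (env : κ → FNM α κ) (m : Multiset (Place α κ)) (σ : Lbl α)
    (m' : Multiset (Place α κ)) : Prop :=
  Tr env m σ m' ∧ ∀ x ∈ σ, x.unres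

/-- First projection of a linking. -/
def pi1 (l : Multiset (Place α κ × Place α κ)) : Multiset (Place α κ) :=
  l.map Prod.fst

/-- Second projection of a linking. -/
def pi2 (l : Multiset (Place α κ × Place α κ)) : Multiset (Place α κ) :=
  l.map Prod.snd

/-- Structure-preserving bisimulation on the net `N_FNM`. -/
def IsSPB (env : κ → FNM α κ) (R : Set (Multiset (Place α κ × Place α κ))) : Prop :=
  ∀ l ∈ R, ∀ c ≤ l,
    (∀ σ m1, NetTr env (pi1 c) σ m1 →
      ∃ m2 cb, NetTr env (pi2 c) σ m2 ∧
        pi1 cb = m1 ∧ pi2 cb = m2 ∧ l - c + cb ∈ R) ∧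
    (∀ σ m2, NetTr env (pi2 c) σ m2 →
      ∃ m1 cb, NetTr env (pi1 c) σ m1 ∧
        pi1 cb = m1 ∧ pi2 cb = m2 ∧ l - c + cb ∈ R)

/-- `p ~sp q`: some structure-preserving bisimulation contains a linking
projecting on `dec(p)` and `dec(q)`. -/
def SPEq (env : κ → FNM α κ) (p q : FNM α κ) : Prop :=
  ∃ R, IsSPB env R ∧ ∃ l ∈ R,
    pi1 l = dec (fun _ => false) p ∧ pi2 l = dec (fun _ => false) q

end FNM

namespace FNM

variable {α κ : Type} [DecidableEq α] [DecidableEq κ] [Fintype α]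

theorem Tr.ne_zero' {env : κ → FNM α κ} {m σ m'} (h : Tr env m σ m') : m ≠ 0 := by
  induction h with
  | scom m1 m2 m1' m2' σ1 σ2 σ h1 h2 ha hs ih1 ih2 =>
    intro h0
    exact ih1 (add_eq_zero.mp h0).1
  | _ => simp

theorem not_singleton_add {env : κ → FNM α κ} {m1 m2 σ1 σ2 m1' m2'} {x : Place α κ}
    (h1 : Tr env m1 σ1 m1') (h2 : Tr env m2 σ2 m2') (h : {x} = m1 + m2) : False := by
  have c1 := Multiset.card_pos.mpr h1.ne_zero'
  have c2 := Multiset.card_pos.mpr h2.ne_zero'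
  have := congrArg Multiset.card h
  simp at this
  omega

theorem Tr.spref_inv {env : κ → FNM α κ} {a : α} {s : FNM α κ} {ρ σ m'}
    (h : Tr env {(FNM.spref a s, ρ)} σ m') :
    ∃ σ', σ = XAct.inp a (ρ a) :: σ' ∧ Tr env (dec ρ s) σ' m' := by
  generalize hm : ({(FNM.spref a s, ρ)} : Multiset (Place α κ)) = m at h
  cases h with
  | scom m1 m2 m1' m2' σ1 σ2 σ h1 h2 ha hs => exact (not_singleton_add h1 h2 hm).elim
  | spref ρ' b t σ' _ ht =>
    simp at hm
    obtain ⟨⟨rfl, rfl⟩, rfl⟩ := hm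
    exact ⟨_, rfl, ht⟩
  | _ => simp at hm

theorem Tr.sum_inv {env : κ → FNM α κ} {s t : FNM α κ} {ρ σ m'}
    (h : Tr env {(FNM.sum s t, ρ)} σ m') :
    Tr env (dec ρ s) σ m' ∨ Tr env (dec ρ t) σ m' := by
  generalize hm : ({(FNM.sum s t, ρ)} : Multiset (Place α κ)) = m at h
  cases h with
  | scom m1 m2 m1' m2' σ1 σ2 σ h1 h2 ha hs => exact (not_singleton_add h1 h2 hm).elim
  | sum1 ρ' s1 s2 _ _ ht =>
    simp at hm
    obtain ⟨⟨rfl, rfl⟩, rfl⟩ := hm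
    exact Or.inl ht
  | sum2 ρ' s1 s2 _ _ ht =>
    simp at hm
    obtain ⟨⟨rfl, rfl⟩, rfl⟩ := hm
    exact Or.inr ht
  | _ => simp at hm

def IdR : Set (Multiset (Place α κ × Place α κ)) := {l | ∀ x ∈ l, x.1 = x.2}

def diag (m : Multiset (Place α κ)) : Multiset (Place α κ × Place α κ) := m.map fun x => (x, x)

theorem pi1_diag (m : Multiset (Place α κ)) : pi1 (diag m) = m := by
  simp [pi1, diag]

theorem pi2_diag (m : Multiset (Place α κ)) : pi2 (diag m) = m := by
  simp [pi2, diag]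

theorem diag_mem (m : Multiset (Place α κ)) : diag m ∈ (IdR : Set (Multiset (Place α κ × Place α κ))) := by
  intro x hx
  simp only [diag, Multiset.mem_map] at hx
  obtain ⟨y, _, rfl⟩ := hx
  rfl

theorem isSPB_IdR (env : κ → FNM α κ) : IsSPB env IdR := by
  intro l hl c hc
  have e : pi1 c = pi2 c :=
    Multiset.map_congr rfl fun x hx => hl x (Multiset.mem_of_le hc hx)
  have hd : ∀ m, l - c + diag m ∈ (IdR : Set (Multiset (Place α κ × Place α κ))) := by
    intro m x hx
    rcases Multiset.mem_add.mp hx with hx | hx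
    · exact hl x (Multiset.mem_of_le (Multiset.sub_le_self _ _) hx)
    · exact diag_mem m x hx
  exact ⟨fun σ m h => ⟨m, diag m, e ▸ h, pi1_diag m, pi2_diag m, hd m⟩,
    fun σ m h => ⟨m, diag m, e ▸ h, pi1_diag m, pi2_diag m, hd m⟩⟩

theorem isSPB_union {env : κ → FNM α κ} {R S} (hR : IsSPB env R) (hS : IsSPB env S) :
    IsSPB env (R ∪ S) := by
  rintro l (hl | hl) c hc
  · refine ⟨fun σ m h => ?_, fun σ m h => ?_⟩
    · obtain ⟨m2, cb, h1, h2, h3, h4⟩ := (hR l hl c hc).1 σ m h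
      exact ⟨m2, cb, h1, h2, h3, Or.inl h4⟩
    · obtain ⟨m2, cb, h1, h2, h3, h4⟩ := (hR l hl c hc).2 σ m h
      exact ⟨m2, cb, h1, h2, h3, Or.inl h4⟩
  · refine ⟨fun σ m h => ?_, fun σ m h => ?_⟩
    · obtain ⟨m2, cb, h1, h2, h3, h4⟩ := (hS l hl c hc).1 σ m h
      exact ⟨m2, cb, h1, h2, h3, Or.inr h4⟩
    · obtain ⟨m2, cb, h1, h2, h3, h4⟩ := (hS l hl c hc).2 σ m h
      exact ⟨m2, cb, h1, h2, h3, Or.inr h4⟩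

/-- Adding one singleton linking to an sp-bisimulation. -/
theorem isSPB_insert {env : κ → FNM α κ} {R} (hR : IsSPB env R) (x y : Place α κ)
    (h1 : ∀ σ m1, NetTr env {x} σ m1 → ∃ cb ∈ R, NetTr env {y} σ (pi2 cb) ∧ pi1 cb = m1)
    (h2 : ∀ σ m2, NetTr env {y} σ m2 → ∃ cb ∈ R, NetTr env {x} σ (pi1 cb) ∧ pi2 cb = m2) :
    IsSPB env (insert {(x, y)} R) := by
  rintro l (rfl | hl) c hc
  · rcases Multiset.le_singleton.mp hc with rfl | rfl
    · exact ⟨fun σ m h => (h.1.ne_zero' rfl).elim, fun σ m h => (h.1.ne_zero' rfl).elim⟩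
    · refine ⟨fun σ m h => ?_, fun σ m h => ?_⟩
      · obtain ⟨cb, hcb, ht, e⟩ := h1 σ m h
        exact ⟨_, cb, ht, e, rfl, Or.inr (by simpa using hcb)⟩
      · obtain ⟨cb, hcb, ht, e⟩ := h2 σ m h
        exact ⟨_, cb, ht, rfl, e, Or.inr (by simpa using hcb)⟩
  · refine ⟨fun σ m h => ?_, fun σ m h => ?_⟩
    · obtain ⟨m2, cb, h1, h2, h3, h4⟩ := (hR l hl c hc).1 σ m h
      exact ⟨m2, cb, h1, h2, h3, Or.inr h4⟩
    · obtain ⟨m2, cb, h1, h2, h3, h4⟩ := (hR l hl c hc).2 σ m h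
      exact ⟨m2, cb, h1, h2, h3, Or.inr h4⟩

end FNM

open FNM in
/-- structure-preserving bisimilarity is a congruence for
strong prefixing and for choice: for FNM guarded processes `p, q` with
`p ~sp q`, (i) `a̲.p ~sp a̲.q` for every input action `a`, and
(ii) `p + r ~sp q + r` for every FNM guarded process `r`. -/
theorem speq_congr_spref_sum {α κ : Type} [DecidableEq α] [DecidableEq κ]
    [Fintype α] [Finite κ]
    (env : κ → FNM α κ) (henv : ∀ c, Grd (env c) ∧ VarFree (env c))
    (p q : FNM α κ) (hp : Grd p) (hq : Grd q)
    (hpv : VarFree p) (hqv : VarFree q)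
    (h : SPEq env p q) :
    (∀ a : α, SPEq env (FNM.spref a p) (FNM.spref a q)) ∧
    (∀ r : FNM α κ, Grd r → VarFree r →
      SPEq env (FNM.sum p r) (FNM.sum q r)) := by
  obtain ⟨R, hR, l, hl, e1, e2⟩ := h
  have F : ∀ σ m, NetTr env (dec (fun _ => false) p) σ m →
      ∃ cb ∈ R, NetTr env (dec (fun _ => false) q) σ (pi2 cb) ∧ pi1 cb = m := by
    intro σ m h
    obtain ⟨m2, cb, ht, h1, rfl, h3⟩ := (hR l hl l le_rfl).1 σ m (e1 ▸ h)
    exact ⟨cb, by simpa using h3, e2 ▸ ht, h1⟩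
  have B : ∀ σ m, NetTr env (dec (fun _ => false) q) σ m →
      ∃ cb ∈ R, NetTr env (dec (fun _ => false) p) σ (pi1 cb) ∧ pi2 cb = m := by
    intro σ m h
    obtain ⟨m2, cb, ht, rfl, h1, h3⟩ := (hR l hl l le_rfl).2 σ m (e2 ▸ h)
    exact ⟨cb, by simpa using h3, e1 ▸ ht, h1⟩
  constructor
  · intro a
    refine ⟨_, isSPB_insert hR (FNM.spref a p, fun _ => false) (FNM.spref a q, fun _ => false)
      ?_ ?_, _, Or.inl rfl, by simp [pi1, dec], by simp [pi2, dec]⟩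
    · rintro σ m ⟨ht, hu⟩
      obtain ⟨σ', rfl, ht'⟩ := ht.spref_inv
      obtain ⟨cb, hcb, hn, e⟩ := F σ' m ⟨ht', fun x hx => hu x (List.mem_cons_of_mem _ hx)⟩
      exact ⟨cb, hcb, ⟨Tr.spref _ _ _ _ _ hn.1, hu⟩, e⟩
    · rintro σ m ⟨ht, hu⟩
      obtain ⟨σ', rfl, ht'⟩ := ht.spref_inv
      obtain ⟨cb, hcb, hn, e⟩ := B σ' m ⟨ht', fun x hx => hu x (List.mem_cons_of_mem _ hx)⟩
      exact ⟨cb, hcb, ⟨Tr.spref _ _ _ _ _ hn.1, hu⟩, e⟩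
  · intro r _ _
    refine ⟨_, isSPB_insert (isSPB_union hR (isSPB_IdR env)) (FNM.sum p r, fun _ => false)
      (FNM.sum q r, fun _ => false)
      ?_ ?_, _, Or.inl rfl, by simp [pi1, dec], by simp [pi2, dec]⟩
    · rintro σ m ⟨ht, hu⟩
      rcases ht.sum_inv with ht' | ht'
      · obtain ⟨cb, hcb, hn, e⟩ := F σ m ⟨ht', hu⟩
        exact ⟨cb, Or.inl hcb, ⟨Tr.sum1 _ _ _ _ _ hn.1, hu⟩, e⟩
      · exact ⟨diag m, Or.inr (diag_mem m),
          ⟨Tr.sum2 _ _ _ _ _ (by rw [pi2_diag]; exact ht'), hu⟩, pi1_diag m⟩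
    · rintro σ m ⟨ht, hu⟩
      rcases ht.sum_inv with ht' | ht'
      · obtain ⟨cb, hcb, hn, e⟩ := B σ m ⟨ht', hu⟩
        exact ⟨cb, Or.inl hcb, ⟨Tr.sum1 _ _ _ _ _ hn.1, hu⟩, e⟩
      · exact ⟨diag m, Or.inr (diag_mem m),
          ⟨Tr.sum2 _ _ _ _ _ (by rw [pi1_diag]; exact ht'), hu⟩, pi2_diag m⟩
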